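/- There do not exist a matrix M ∈ S(G121) and real numbers λ_1 < λ_2 < λ_3 such that the characteristic polynomial of M equals (X − λ_1) (X − λ_2)^3 (X − λ_3)^2, and there do not exist such M and λ_1 < λ_2 < λ_3 with characteristic polynomial (X − λ_1)^2 (X − λ_2)^3 (X − λ_3). That is, G121 attains neither ordered multiplicity list (1,3,2) nor (2,3,1). -/

import Mathlib

/-!
A symmetric real matrix with pattern `G121` has no three distinct eigenvalues of multiplicities
`3, 2, 1`, in any order; only the eigenvalues `l` of multiplicity `3` and `m` of multiplicity `2`
matter. `G121` is `K_{2,3}`, with parts `{2, 4}` and `{3, 5, 6}`, plus a pendant vertex `1` at `2`.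

For symmetric `M` a root `l` of the characteristic polynomial of multiplicity `k` lowers the rank of
`M - l` by at least `k` (`rank_sub_scalar_add_le`). So `N = M - l` has rank at most `3` and its `4 × 4`
minors vanish. This forces `N₁₁ ≠ 0`, `N₃₃ = N₅₅ = N₆₆ = 0`, and makes the vectors
`a = (N₂₃, N₂₅, N₂₆)` and `b = (N₄₃, N₄₅, N₄₆)` parallel. Vertices `3, 5, 6` then act as a single
one, so off the kernel `N` behaves like a weighted path `1 - 2 - v - 4`, whose eigenvalues are
simple. Concretely, for `s = m - l ≠ 0` the `5 × 5` minor of `N - s` without row `4` and column `1`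
is, up to sign, `N₁₂ s² (a ⬝ b)`, which is nonzero. This contradicts `rank (N - s) ≤ 4`.
-/

open Polynomial Matrix

/-- `M ∈ S(G)`: real symmetric matrix whose off-diagonal nonzero pattern is
given exactly by the adjacency of `G`. -/
def inS {V : Type*} (G : SimpleGraph V) (M : Matrix V V ℝ) : Prop :=
  M.IsSymm ∧ ∀ i j : V, i ≠ j → (M i j ≠ 0 ↔ G.Adj i j)

/-- The graph `G121` on vertices 1..6 (encoded as `Fin 6`, vertex `v` is `v.val + 1`). -/
def G121 : SimpleGraph (Fin 6) :=
  SimpleGraph.fromRel (fun i j =>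
    ((i : ℕ) + 1, (j : ℕ) + 1) ∈ [(1, 2), (2, 3), (2, 5), (2, 6), (3, 4), (4, 5), (4, 6)])

/-- A root of multiplicity at least `k` of the characteristic polynomial of a real symmetric matrix
is an eigenvalue of geometric multiplicity at least `k`. -/
lemma rank_sub_scalar_add_le {n : Type*} [Fintype n] [DecidableEq n] {M : Matrix n n ℝ}
    (hM : M.IsSymm) (l : ℝ) (k : ℕ) (h : (X - C l) ^ k ∣ M.charpoly) :
    (M - scalar n l).rank + k ≤ Fintype.card n := by
  have hN : (M - scalar n l).IsHermitian := by
    rw [Matrix.IsHermitian, conjTranspose_eq_transpose_of_trivial, transpose_sub, hM.eq]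
    simp
  have hd : (X - C 0) ^ k ∣ (M - scalar n l).charpoly := by
    rw [charpoly_sub_scalar]
    obtain ⟨q, hq⟩ := h
    exact ⟨q.comp (X + C l), by rw [hq]; simp⟩
  have hk := (le_rootMultiplicity_iff (charpoly_monic _).ne_zero).2 hd
  rw [← count_roots, hN.roots_charpoly_eq_eigenvalues, Multiset.count_map] at hk
  have hc : k ≤ Fintype.card {i // hN.eigenvalues i = 0} := by
    rw [Fintype.card_subtype]
    refine hk.trans (le_of_eq ?_)
    simp only [Finset.card_def, Finset.filter_val, Function.comp_apply, RCLike.ofReal_real_eq_id,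
      id_eq, eq_comm]
  rw [hN.rank_eq_card_non_zero_eigs, Fintype.card_subtype_compl]
  have := Fintype.card_subtype_le (fun i => hN.eigenvalues i = 0)
  omega

/-- Minors of order larger than the rank vanish. -/
lemma det_submatrix_eq_zero {n : Type*} [Fintype n] {N : Matrix n n ℝ} {k : ℕ}
    (h : N.rank < k) (r c : Fin k → n) : (N.submatrix r c).det = 0 := by
  by_contra hdet
  have h1 := rank_of_isUnit (N.submatrix r c)
    ((isUnit_iff_isUnit_det _).2 (isUnit_iff_ne_zero.2 hdet))
  have h2 := rank_submatrix_le N r c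
  rw [h1, Fintype.card_fin] at h2
  omega

/-- The matrices with pattern `G121`, written out entrywise. -/
lemma inS_G121_eq {M : Matrix (Fin 6) (Fin 6) ℝ} (hM : inS G121 M) :
    ∃ d₁ d₂ d₃ d₄ d₅ d₆ p a₃ a₅ a₆ b₃ b₅ b₆ : ℝ,
      p ≠ 0 ∧ a₃ ≠ 0 ∧ a₅ ≠ 0 ∧ a₆ ≠ 0 ∧ b₃ ≠ 0 ∧ b₅ ≠ 0 ∧ b₆ ≠ 0 ∧
      M = !![d₁, p, 0, 0, 0, 0;
             p, d₂, a₃, 0, a₅, a₆;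
             0, a₃, d₃, b₃, 0, 0;
             0, 0, b₃, d₄, b₅, b₆;
             0, a₅, 0, b₅, d₅, 0;
             0, a₆, 0, b₆, 0, d₆] := by
  obtain ⟨hs, h⟩ := hM
  refine ⟨M 0 0, M 1 1, M 2 2, M 3 3, M 4 4, M 5 5, M 0 1, M 1 2, M 1 4, M 1 5, M 3 2, M 3 4,
    M 3 5, ?_, ?_, ?_, ?_, ?_, ?_, ?_, ?_⟩
  iterate 7 exact (h _ _ (by decide)).2 (by simp [G121])
  have hz : ∀ i j : Fin 6, i ≠ j → ¬ G121.Adj i j → M i j = 0 := fun i j hij hn => by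
    by_contra hne
    exact hn ((h i j hij).1 hne)
  ext i j
  fin_cases i <;> fin_cases j <;>
    first
    | rfl
    | exact hs.apply _ _
    | exact hz _ _ (by decide) (by simp [G121])

/-- A matrix with pattern `G121` has no triple eigenvalue together with a different double one. -/
lemma false_of_triple_of_double {M : Matrix (Fin 6) (Fin 6) ℝ} (hM : inS G121 M) {l m : ℝ}
    (hlm : l ≠ m) (h3 : (X - C l) ^ 3 ∣ M.charpoly) (h2 : (X - C m) ^ 2 ∣ M.charpoly) : False := by
  have r3 := rank_sub_scalar_add_le hM.1 l 3 h3
  have r2 := rank_sub_scalar_add_le hM.1 m 2 h2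
  rw [Fintype.card_fin] at r3 r2
  obtain ⟨d₁, d₂, d₃, d₄, d₅, d₆, p, a₃, a₅, a₆, b₃, b₅, b₆, hp, ha₃, ha₅, ha₆, hb₃, hb₅, hb₆,
    rfl⟩ := inS_G121_eq hM
  have minor := det_submatrix_eq_zero (k := 4) (Nat.lt_succ_of_le (Nat.le_of_add_le_add_right r3))
  have minor' := det_submatrix_eq_zero (k := 5) (Nat.lt_succ_of_le (Nat.le_of_add_le_add_right r2))
  clear h3 h2 r3 r2 hM
  -- `e1` excludes `N₁₁ = 0`; `e3`, `e5`, `e6` make the diagonal entries at `3`, `5`, `6` vanish;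
  -- `p5`, `p6` express that `a` and `b` are parallel; `f` is the minor of `N - s`.
  have e1 := minor ![0, 1, 2, 3] ![0, 1, 3, 4]
  have e3 := minor ![0, 1, 2, 4] ![0, 2, 5, 3]
  have e5 := minor ![0, 1, 4, 2] ![0, 4, 5, 3]
  have e6 := minor ![0, 1, 5, 2] ![0, 5, 4, 3]
  have p5 := minor ![0, 1, 2, 3] ![0, 2, 4, 3]
  have p6 := minor ![0, 1, 2, 3] ![0, 2, 5, 3]
  have f := minor' ![0, 1, 2, 4, 5] ![1, 2, 3, 4, 5]
  clear minor minor'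
  simp only [det_succ_row_zero, submatrix_apply, det_isEmpty] at e1 e3 e5 e6 p5 p6 f
  simp [Fin.sum_univ_succ, Fin.succAbove, diagonal_apply] at e1 e3 e5 e6 p5 p6 f
  have hd : d₁ - l ≠ 0 := fun h => by simp [h, hp, hb₃, hb₅] at e1
  simp only [hd, ha₅, ha₆, hb₃, hb₅, hp, false_or, or_false] at e3 e5 e6 p5 p6 f
  obtain rfl : d₃ = l := sub_eq_zero.1 e3
  obtain rfl : d₅ = d₃ := sub_eq_zero.1 e5
  obtain rfl : d₆ = d₅ := sub_eq_zero.1 e6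
  have q5 : a₅ * b₃ = a₃ * b₅ := mul_left_cancel₀ hb₃ (by linear_combination p5)
  have q6 : a₆ * b₃ = a₃ * b₆ := mul_left_cancel₀ hb₃ (by linear_combination p6)
  have hs : (d₆ - m) ^ 2 ≠ 0 := pow_ne_zero _ (sub_ne_zero.2 hlm)
  have hab : a₃ * b₃ + a₅ * b₅ + a₆ * b₆ = 0 :=
    mul_left_cancel₀ hs (by linear_combination f)
  -- As `b₃ a = a₃ b`, the vanishing of `a ⬝ b` gives `a₃ (b ⬝ b) = 0`.
  have hbb : a₃ * (b₃ ^ 2 + b₅ ^ 2 + b₆ ^ 2) = 0 := by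
    linear_combination b₃ * hab - b₅ * q5 - b₆ * q6
  have : 0 < b₃ ^ 2 + b₅ ^ 2 + b₆ ^ 2 := by positivity
  exact (mul_ne_zero ha₃ this.ne') hbb

theorem G121_not_132_231 :
    (¬ ∃ (M : Matrix (Fin 6) (Fin 6) ℝ) (l₁ l₂ l₃ : ℝ),
        inS G121 M ∧ l₁ < l₂ ∧ l₂ < l₃ ∧
        M.charpoly = (X - C l₁) * (X - C l₂) ^ 3 * (X - C l₃) ^ 2) ∧
    (¬ ∃ (M : Matrix (Fin 6) (Fin 6) ℝ) (l₁ l₂ l₃ : ℝ),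
        inS G121 M ∧ l₁ < l₂ ∧ l₂ < l₃ ∧
        M.charpoly = (X - C l₁) ^ 2 * (X - C l₂) ^ 3 * (X - C l₃)) := by
  constructor
  · rintro ⟨M, l₁, l₂, l₃, hM, -, h23, h⟩
    exact false_of_triple_of_double hM h23.ne
      (h ▸ (Dvd.intro_left _ rfl).mul_right _) (h ▸ Dvd.intro_left _ rfl)
  · rintro ⟨M, l₁, l₂, l₃, hM, h12, -, h⟩
    exact false_of_triple_of_double hM h12.ne'
      (h ▸ (Dvd.intro_left _ rfl).mul_right _) (h ▸ (Dvd.intro _ rfl).mul_right _)
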